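/- arXiv:2110.11651 — 3 statements merged into one kernel-verified Lean document; each statement's English description precedes it below -/
import Mathlib

section
/- In the local public good game under Assumption 1 (normality), let (x*, y*, g*) be a Nash equilibrium and suppose two players i, j ∈ N satisfy x*_i > k and x*_j > k. Then i and j are linked in equilibrium: ḡ*_{ij} = 1, i.e. g*_{ij} = 1 or g*_{ji} = 1. -/
open Finset Function

noncomputable section

/-- A directed network on `n` players: `g i j = true` iff `i` sponsors a link to `j`. -/
abbrev Net (n : ℕ) := Fin n → Fin n → Bool

/-- The number of links sponsored by player `i`. -/
def deg {n : ℕ} (g : Net n) (i : Fin n) : ℕ :=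
  (Finset.univ.filter fun j => g i j = true).card

/-- Spillovers received by player `i`: the provision of the players she links to. -/
def spill {n : ℕ} (x : Fin n → ℝ) (g : Net n) (i : Fin n) : ℝ :=
  ∑ j, if g i j = true then x j else 0

/-- Public good consumption of player `i`: own provision plus spillovers. -/
def cons {n : ℕ} (x : Fin n → ℝ) (g : Net n) (i : Fin n) : ℝ :=
  x i + spill x g i

/-- The primitives of the local public good game: prices of the private good, wealths,
linking cost, utilities and induced Engel curves. -/
structure Game (n : ℕ) where
  p : Fin n → ℝ
  w : Fin n → ℝ
  k : ℝ
  U : Fin n → ℝ → ℝ → ℝ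
  γ : Fin n → ℝ → ℝ
  p_pos : ∀ i, 0 < p i
  w_pos : ∀ i, 0 < w i
  k_nonneg : 0 ≤ k
  U_smooth : ∀ i, ContDiff ℝ 2 fun q : ℝ × ℝ => U i q.1 q.2
  U_sconcave : ∀ i, StrictConcaveOn ℝ Set.univ fun q : ℝ × ℝ => U i q.1 q.2
  U_mono_x : ∀ i b, StrictMono fun a => U i a b
  U_mono_y : ∀ i a, StrictMono fun b => U i a b

/-- Net social income of player `i`. -/
def netInc {n : ℕ} (G : Game n) (x : Fin n → ℝ) (g : Net n) (i : Fin n) : ℝ :=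
  G.w i - (deg g i : ℝ) * G.k + spill x g i

/-- Assumption 1 (normality): each Engel curve is continuously differentiable with
derivative in `[0,1]`. -/
def NormalGame {n : ℕ} (G : Game n) : Prop :=
  ∀ i, ContDiff ℝ 1 (G.γ i) ∧ ∀ t : ℝ, deriv (G.γ i) t ∈ Set.Icc (0 : ℝ) 1

/-- `G.γ i` is the demand (Engel curve) induced by `U i`: on the budget line with
income `m`, and under the constraint that public good consumption is at least the
spillovers `s`, the optimal public good consumption is `max (γ i m) s`. -/
def EngelCompatible {n : ℕ} (G : Game n) : Prop :=
  ∀ (i : Fin n) (m s xb yb : ℝ), 0 ≤ s → s ≤ xb → 0 ≤ yb → xb + G.p i * yb = m →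
    (∀ xb' yb' : ℝ, s ≤ xb' → 0 ≤ yb' → xb' + G.p i * yb' = m →
      G.U i xb' yb' ≤ G.U i xb yb) →
    xb = max (G.γ i m) s

/-- Budget feasibility of player `i`'s strategy. -/
def Feasible {n : ℕ} (G : Game n) (x y : Fin n → ℝ) (g : Net n) (i : Fin n) : Prop :=
  0 ≤ x i ∧ 0 ≤ y i ∧ g i i = false ∧
    x i + G.p i * y i + (deg g i : ℝ) * G.k = G.w i

/-- Player `i`'s payoff. -/
def payoff {n : ℕ} (G : Game n) (x y : Fin n → ℝ) (g : Net n) (i : Fin n) : ℝ :=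
  G.U i (cons x g i) (y i)

/-- Replace row `i` of the network `g` by `r` (a unilateral linking deviation). -/
def updRow {n : ℕ} (g : Net n) (i : Fin n) (r : Fin n → Bool) : Net n :=
  fun a b => if a = i then r b else g a b

/-- Nash equilibrium: every player's strategy is feasible and no feasible unilateral
deviation (in provision, private consumption and links) improves her payoff. -/
def Nash {n : ℕ} (G : Game n) (x y : Fin n → ℝ) (g : Net n) : Prop :=
  (∀ i, Feasible G x y g i) ∧
  ∀ (i : Fin n) (xi yi : ℝ) (r : Fin n → Bool),
    Feasible G (Function.update x i xi) (Function.update y i yi) (updRow g i r) i →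
    payoff G (Function.update x i xi) (Function.update y i yi) (updRow g i r) i ≤
      payoff G x y g i

/-- Sociable Nash equilibrium: a Nash equilibrium in which any payoff-equivalent
deviation only uses links already established in equilibrium (players indifferent
about a link establish it). -/
def Sociable {n : ℕ} (G : Game n) (x y : Fin n → ℝ) (g : Net n) : Prop :=
  Nash G x y g ∧
  ∀ (i : Fin n) (xi yi : ℝ) (r : Fin n → Bool),
    Feasible G (Function.update x i xi) (Function.update y i yi) (updRow g i r) i →
    payoff G (Function.update x i xi) (Function.update y i yi) (updRow g i r) i =
      payoff G x y g i →
    ∀ j, r j = true → g i j = true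

/-- Strict Nash equilibrium: any feasible unilateral deviation that differs from the
equilibrium strategy strictly reduces the deviator's payoff. -/
def StrictNash {n : ℕ} (G : Game n) (x y : Fin n → ℝ) (g : Net n) : Prop :=
  (∀ i, Feasible G x y g i) ∧
  ∀ (i : Fin n) (xi yi : ℝ) (r : Fin n → Bool),
    Feasible G (Function.update x i xi) (Function.update y i yi) (updRow g i r) i →
    (xi ≠ x i ∨ yi ≠ y i ∨ r ≠ g i) →
    payoff G (Function.update x i xi) (Function.update y i yi) (updRow g i r) i <
      payoff G x y g i

/-- `(xi, yi)` is an optimal bundle for player `i` in isolation (no links). -/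
def IsoOpt {n : ℕ} (G : Game n) (i : Fin n) (xi yi : ℝ) : Prop :=
  0 ≤ xi ∧ 0 ≤ yi ∧ xi + G.p i * yi = G.w i ∧
    ∀ xi' yi' : ℝ, 0 ≤ xi' → 0 ≤ yi' → xi' + G.p i * yi' = G.w i →
      G.U i xi' yi' ≤ G.U i xi yi

/-- `g` is a core-periphery graph with core `C`: core players are mutually linked
(with reciprocated links), periphery players have no links among themselves, and
every non-isolated periphery player links to some core player. -/
def IsCorePeriphery {n : ℕ} (g : Net n) (C : Finset (Fin n)) : Prop :=
  (∀ i ∈ C, ∀ j ∈ C, i ≠ j → g i j = true ∧ g j i = true) ∧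
  (∀ i ∉ C, ∀ j ∉ C, g i j = false) ∧
  (∀ i ∉ C, (∃ j, g i j = true ∨ g j i = true) → ∃ l ∈ C, g i l = true)

/-- `g` is a nested split graph with core `C`: a core-periphery graph in which the
neighborhoods of periphery players are nested. -/
def IsNestedSplit {n : ℕ} (g : Net n) (C : Finset (Fin n)) : Prop :=
  IsCorePeriphery g C ∧
  ∀ i ∉ C, ∀ j ∉ C, deg g j ≤ deg g i → ∀ l, g j l = true → g i l = true

/-- The core of an equilibrium: the players contributing strictly more than the
linking cost. -/
def coreOf {n : ℕ} (G : Game n) (x : Fin n → ℝ) : Finset (Fin n) :=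
  Finset.univ.filter fun i => G.k < x i

/-- Adjacency in the closure of `g`. -/
def adjBar {n : ℕ} (g : Net n) (i j : Fin n) : Prop :=
  g i j = true ∨ g j i = true

/-- All players' consumption choices are optimal given the (fixed) network. -/
def ConsOpt {n : ℕ} (G : Game n) (x y : Fin n → ℝ) (g : Net n) : Prop :=
  ∀ i, Feasible G x y g i ∧
    ∀ xi yi : ℝ,
      Feasible G (Function.update x i xi) (Function.update y i yi) g i →
      payoff G (Function.update x i xi) (Function.update y i yi) g i ≤ payoff G x y g i

/-- Assumption 2: identical preferences and identical price of the private good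
(hence identical Engel curves). -/
def Homogeneous {n : ℕ} (G : Game n) : Prop :=
  ∀ i j, G.U i = G.U j ∧ G.p i = G.p j ∧ G.γ i = G.γ j

/-- Social welfare: the sum of individual payoffs. -/
def welfare {n : ℕ} (G : Game n) (x y : Fin n → ℝ) (g : Net n) : ℝ :=
  ∑ i, G.U i (cons x g i) (y i)

/-- Aggregate feasibility for the social planner: total provision, total private
consumption and total linking costs are financed by total wealth. -/
def FeasAgg {n : ℕ} (G : Game n) (x y : Fin n → ℝ) (g : Net n) : Prop :=
  (∀ i, 0 ≤ x i) ∧ (∀ i, 0 ≤ y i) ∧ (∀ i, g i i = false) ∧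
    ∑ i, x i + ∑ i, G.p i * y i + (∑ i, (deg g i : ℝ)) * G.k ≤ ∑ i, G.w i

/-- Efficient (welfare-maximizing) configuration. -/
def Efficient {n : ℕ} (G : Game n) (x y : Fin n → ℝ) (g : Net n) : Prop :=
  FeasAgg G x y g ∧
  ∀ (x' y' : Fin n → ℝ) (g' : Net n), FeasAgg G x' y' g' →
    welfare G x' y' g' ≤ welfare G x y g

/-- The same game with a different linking cost. -/
def Game.withCost {n : ℕ} (G : Game n) (k' : ℝ) (h : 0 ≤ k') : Game n :=
  { G with k := k', k_nonneg := h }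

/-- The same game with a different wealth distribution. -/
def Game.withWealth {n : ℕ} (G : Game n) (w' : Fin n → ℝ) (h : ∀ i, 0 < w' i) : Game n :=
  { G with w := w', w_pos := h }

/-- Budget feasibility with personalized public good prices `ρ` and lump-sum taxes `τ`. -/
def FeasibleT {n : ℕ} (G : Game n) (ρ τ : Fin n → ℝ) (x y : Fin n → ℝ) (g : Net n)
    (i : Fin n) : Prop :=
  0 ≤ x i ∧ 0 ≤ y i ∧ g i i = false ∧
    ρ i * x i + G.p i * y i + (deg g i : ℝ) * G.k = G.w i - τ i

/-- Nash equilibrium under personalized public good prices `ρ` and lump-sum taxes `τ`. -/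
def NashT {n : ℕ} (G : Game n) (ρ τ : Fin n → ℝ) (x y : Fin n → ℝ) (g : Net n) : Prop :=
  (∀ i, FeasibleT G ρ τ x y g i) ∧
  ∀ (i : Fin n) (xi yi : ℝ) (r : Fin n → Bool),
    FeasibleT G ρ τ (Function.update x i xi) (Function.update y i yi) (updRow g i r) i →
    payoff G (Function.update x i xi) (Function.update y i yi) (updRow g i r) i ≤
      payoff G x y g i

/-!
If `i` does not sponsor a link to `j`, she can cut her own provision by the linking cost `k` and
spend the money saved on that link. Her private consumption is unchanged, while her public good
consumption changes by `x j - k > 0`, contradicting equilibrium. Hence each of two large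
contributors links to the other.
-/

/-- The out-neighbourhood `N_i(g)`: the players to whom `i` sponsors a link. -/
def nbhd {n : ℕ} (g : Net n) (i : Fin n) : Finset (Fin n) :=
  Finset.univ.filter fun j => g i j = true

/-- The network `g` in which `i` also sponsors a link to `j`, written as a change of the row of `i`
so that it is a unilateral deviation. -/
def addLink {n : ℕ} (g : Net n) (i j : Fin n) : Net n :=
  updRow g i (Function.update (g i) j true)

section Network

variable {n : ℕ} {x : Fin n → ℝ} {g : Net n} {i j : Fin n}

lemma mem_nbhd : j ∈ nbhd g i ↔ g i j = true := by
  simp only [nbhd, Finset.mem_filter_univ]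

lemma deg_eq_card_nbhd (g : Net n) (i : Fin n) : deg g i = (nbhd g i).card := rfl

lemma spill_eq_sum_nbhd (x : Fin n → ℝ) (g : Net n) (i : Fin n) :
    spill x g i = ∑ l ∈ nbhd g i, x l :=
  (Finset.sum_filter _ _).symm

lemma nbhd_addLink (g : Net n) (i j : Fin n) :
    nbhd (addLink g i j) i = insert j (nbhd g i) := by
  ext l
  by_cases hl : l = j <;> simp [mem_nbhd, addLink, updRow, hl]

lemma deg_addLink (hj : j ∉ nbhd g i) : deg (addLink g i j) i = deg g i + 1 := by
  rw [deg_eq_card_nbhd, nbhd_addLink, Finset.card_insert_of_notMem hj, ← deg_eq_card_nbhd]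

lemma spill_addLink (hj : j ∉ nbhd g i) :
    spill x (addLink g i j) i = spill x g i + x j := by
  rw [spill_eq_sum_nbhd, nbhd_addLink, Finset.sum_insert hj, ← spill_eq_sum_nbhd, add_comm]

lemma spill_update_of_notMem_nbhd (hj : j ∉ nbhd g i) (c : ℝ) :
    spill (Function.update x j c) g i = spill x g i := by
  simp only [spill_eq_sum_nbhd, Finset.sum_update_of_notMem hj]

lemma cons_update_addLink (hi : i ∉ nbhd g i) (hj : j ∉ nbhd g i) (hij : i ≠ j) (c : ℝ) :
    cons (Function.update x i c) (addLink g i j) i = c + spill x g i + x j := by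
  rw [_root_.cons, spill_addLink hj, spill_update_of_notMem_nbhd hi, Function.update_self,
    Function.update_of_ne hij.symm, add_assoc]

end Network

section Game

variable {n : ℕ} {G : Game n} {x y : Fin n → ℝ} {g : Net n} {i j : Fin n}

lemma Feasible.self_notMem_nbhd (h : Feasible G x y g i) : i ∉ nbhd g i := by
  simp [mem_nbhd, h.2.2.1]

lemma Feasible.update_addLink (h : Feasible G x y g i) (hij : i ≠ j) (hj : j ∉ nbhd g i)
    (hi : G.k ≤ x i) :
    Feasible G (Function.update x i (x i - G.k)) y (addLink g i j) i := by
  obtain ⟨-, hy, hii, hbudget⟩ := h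
  refine ⟨?_, hy, ?_, ?_⟩
  · simpa only [Function.update_self, sub_nonneg] using hi
  · simpa [addLink, updRow, hij] using hii
  · rw [Function.update_self, deg_addLink hj, Nat.cast_add_one, ← hbudget]
    ring

lemma Nash.cons_le_of_feasible (h : Nash G x y g) {c : ℝ} {r : Fin n → Bool}
    (hfeas : Feasible G (Function.update x i c) y (updRow g i r) i) :
    cons (Function.update x i c) (updRow g i r) i ≤ cons x g i := by
  have hpayoff := h.2 i c (y i) r
  rw [Function.update_eq_self] at hpayoff
  exact (G.U_mono_x i (y i)).le_iff_le.mp (hpayoff hfeas)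

theorem large_contributors_linked_general (hNE : Nash G x y g) (hij : i ≠ j)
    (hi : G.k ≤ x i) (hj : G.k < x j) : g i j = true := by
  by_contra hg
  have hnot : j ∉ nbhd g i := mem_nbhd.not.mpr hg
  have hfeas := hNE.1 i
  have hle : cons (Function.update x i (x i - G.k)) (addLink g i j) i ≤ cons x g i :=
    hNE.cons_le_of_feasible (hfeas.update_addLink hij hnot hi)
  rw [cons_update_addLink hfeas.self_notMem_nbhd hnot hij, _root_.cons] at hle
  linarith

end Game

/-- In a Nash equilibrium under Assumption 1, any two players whose
contributions strictly exceed the linking cost are linked in the closure. -/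
theorem large_contributors_linked {n : ℕ} (G : Game n) (hk : 0 < G.k)
    (hN : NormalGame G) (hEC : EngelCompatible G)
    (x y : Fin n → ℝ) (g : Net n) (hNE : Nash G x y g)
    (i j : Fin n) (hij : i ≠ j) (hi : G.k < x i) (hj : G.k < x j) :
    g i j = true ∨ g j i = true := by
  exact Or.inl (large_contributors_linked_general hNE hij hi.le hj)
end
end

section
/- In the local public good game under Assumption 1 (normality), if k ≤ k̄ = max_{i∈N} x_i^I, then the network of any strict Nash equilibrium is a nested split graph: it is a core-periphery graph in which the neighborhoods of periphery players are nested, i.e. for any periphery players i, j, if η_j(g) ≤ η_i(g) then N_j(g) ⊆ N_i(g). -/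
open Finset Function

noncomputable section

/-!
In a strict equilibrium, a player who picks a different set of links without spending more on
provision and links together must end up with strictly less public good: otherwise she would put
the savings into the private good and be at least as well off. Three such deviations suffice.

* Drop a link to `j` and provide `x j` more oneself: so a linked `j` has `x j > k`.
* Provide `k` less and link to `j` instead: so two players providing more than `k` are linked.
* Swap a linked player `m` for an unlinked `l`: so `x l < x m`.

The first two yield the core-periphery structure. By the third, each player links to the largest
providers, so the neighborhoods of two unlinked players are comparable, and counting links decides
which is contained in the other.
-/

section Network

variable {n : ℕ} {g : Net n} {i j : Fin n}

/-- The neighborhood `N_i(g)`, as a finset: the players to whom `i` sponsors a link. -/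
def outNeighbors (g : Net n) (i : Fin n) : Finset (Fin n) :=
  {j | g i j = true}

theorem mem_outNeighbors : j ∈ outNeighbors g i ↔ g i j = true := by
  simp [outNeighbors]

theorem card_outNeighbors (g : Net n) (i : Fin n) : #(outNeighbors g i) = deg g i :=
  rfl

theorem spill_eq_sum_outNeighbors (x : Fin n → ℝ) (g : Net n) (i : Fin n) :
    spill x g i = ∑ j ∈ outNeighbors g i, x j := by
  simp [spill, outNeighbors, sum_filter]

theorem outNeighbors_updRow (g : Net n) (i : Fin n) (S : Finset (Fin n)) :
    outNeighbors (updRow g i fun j => decide (j ∈ S)) i = S := by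
  ext j
  simp [mem_outNeighbors, updRow]

theorem cons_update_updRow (x : Fin n → ℝ) (g : Net n) (a : ℝ) {S : Finset (Fin n)}
    (hi : i ∉ S) :
    _root_.cons (update x i a) (updRow g i fun j => decide (j ∈ S)) i = a + ∑ j ∈ S, x j := by
  have hsum : ∑ j ∈ S, update x i a j = ∑ j ∈ S, x j :=
    sum_congr rfl fun j hj => update_of_ne (ne_of_mem_of_not_mem hj hi) _ _
  rw [_root_.cons, spill_eq_sum_outNeighbors, outNeighbors_updRow, hsum, update_self]

theorem isCorePeriphery_of_forall_mem {C : Finset (Fin n)}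
    (hmem : ∀ i j, g i j = true → j ∈ C)
    (hlink : ∀ i ∈ C, ∀ j ∈ C, i ≠ j → g i j = true) : IsCorePeriphery g C := by
  refine ⟨fun i hi j hj hne => ⟨hlink i hi j hj hne, hlink j hj i hi hne.symm⟩,
    fun i _ j hj => Bool.eq_false_iff.2 fun h => hj (hmem i j h), ?_⟩
  rintro i hi ⟨j, hij | hji⟩
  · exact ⟨j, hmem i j hij, hij⟩
  · exact absurd (hmem j i hji) hi

theorem outNeighbors_subset_of_deg_le {α : Type*} [Preorder α] {v : Fin n → α}
    (hv : ∀ i l m, l ≠ i → l ∉ outNeighbors g i → m ∈ outNeighbors g i → v l < v m)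
    (hij : ¬ adjBar g i j) (hdeg : deg g j ≤ deg g i) :
    outNeighbors g j ⊆ outNeighbors g i := by
  intro l hlj
  by_contra hli
  obtain ⟨m, hmi, hmj⟩ : ∃ m ∈ outNeighbors g i, m ∉ outNeighbors g j := by
    by_contra! hsub
    exact hli (eq_of_subset_of_card_le hsub hdeg ▸ hlj)
  have hl : l ≠ i := by
    rintro rfl
    exact hij (Or.inr (mem_outNeighbors.1 hlj))
  have hm : m ≠ j := by
    rintro rfl
    exact hij (Or.inl (mem_outNeighbors.1 hmi))
  exact lt_asymm (hv i l m hl hli hmi) (hv j m l hm hmj hlj)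

end Network

theorem mem_coreOf {n : ℕ} {G : Game n} {x : Fin n → ℝ} {i : Fin n} :
    i ∈ coreOf G x ↔ G.k < x i := by
  simp [coreOf]

namespace StrictNash

variable {n : ℕ} {G : Game n} {x y : Fin n → ℝ} {g : Net n} {i j l m : Fin n}
  {S : Finset (Fin n)} {a b : ℝ}

theorem notMem_outNeighbors_self (hS : StrictNash G x y g) (i : Fin n) :
    i ∉ outNeighbors g i := by
  simp [mem_outNeighbors, (hS.1 i).2.2.1]

theorem utility_lt_of_ne (hS : StrictNash G x y g) (ha : 0 ≤ a) (hb : 0 ≤ b) (hi : i ∉ S)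
    (hbudget : a + G.p i * b + #S * G.k = G.w i)
    (hne : a ≠ x i ∨ b ≠ y i ∨ S ≠ outNeighbors g i) :
    G.U i (a + ∑ j ∈ S, x j) b < G.U i (x i + ∑ j ∈ outNeighbors g i, x j) (y i) := by
  have hfeasible : Feasible G (update x i a) (update y i b)
      (updRow g i fun j => decide (j ∈ S)) i := by
    refine ⟨by simpa using ha, by simpa using hb, by simp [updRow, hi], ?_⟩
    simpa [← card_outNeighbors, outNeighbors_updRow] using hbudget
  have hrow : S ≠ outNeighbors g i → (fun j => decide (j ∈ S)) ≠ g i := by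
    intro hS' hrow
    exact hS' (by ext j; simp [mem_outNeighbors, ← congrFun hrow j])
  have hlt := hS.2 i a b _ hfeasible (hne.imp_right (Or.imp_right hrow))
  rwa [payoff, payoff, cons_update_updRow x g a hi, update_self, _root_.cons,
    spill_eq_sum_outNeighbors] at hlt

theorem publicGood_lt_of_expenditure_le (hS : StrictNash G x y g) (ha : 0 ≤ a) (hi : i ∉ S)
    (hne : S ≠ outNeighbors g i)
    (hle : a + #S * G.k ≤ x i + #(outNeighbors g i) * G.k) :
    a + ∑ j ∈ S, x j < x i + ∑ j ∈ outNeighbors g i, x j := by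
  obtain ⟨-, hy, -, hbudget⟩ := hS.1 i
  rw [← card_outNeighbors] at hbudget
  have hp := G.p_pos i
  set saving := x i + #(outNeighbors g i) * G.k - (a + #S * G.k)
  have hb : y i ≤ y i + saving / G.p i :=
    le_add_of_nonneg_right (div_nonneg (sub_nonneg.2 hle) hp.le)
  have hbudget' : a + G.p i * (y i + saving / G.p i) + #S * G.k = G.w i := by
    rw [mul_add, mul_div_cancel₀ _ hp.ne']
    linarith
  have hlt := hS.utility_lt_of_ne ha (hy.trans hb) hi hbudget' (Or.inr (Or.inr hne))
  exact (G.U_mono_x i (y i)).lt_iff_lt.1 (((G.U_mono_y i _).monotone hb).trans_lt hlt)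

theorem cost_lt_of_mem_outNeighbors (hS : StrictNash G x y g) (hj : j ∈ outNeighbors g i) :
    G.k < x j := by
  by_contra! hle
  have hlt := hS.publicGood_lt_of_expenditure_le (a := x i + x j)
    (add_nonneg (hS.1 i).1 (hS.1 j).1)
    (fun h => hS.notMem_outNeighbors_self i (mem_of_mem_erase h))
    (erase_ne_self.2 hj)
    (by rw [cast_card_erase_of_mem hj]; linarith)
  rw [← add_sum_erase _ x hj] at hlt
  linarith

theorem mem_outNeighbors_of_cost_lt (hS : StrictNash G x y g) (hij : i ≠ j)
    (hi : G.k < x i) (hj : G.k < x j) : j ∈ outNeighbors g i := by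
  by_contra hmem
  have hlt := hS.publicGood_lt_of_expenditure_le (a := x i - G.k)
    (sub_nonneg.2 hi.le)
    (by simp [hij, hS.notMem_outNeighbors_self i])
    (insert_ne_self.2 hmem)
    (by rw [card_insert_of_notMem hmem]; push_cast; linarith)
  rw [sum_insert hmem] at hlt
  linarith

theorem provision_lt_of_notMem_of_mem (hS : StrictNash G x y g) (hli : l ≠ i)
    (hl : l ∉ outNeighbors g i) (hm : m ∈ outNeighbors g i) : x l < x m := by
  have hl' : l ∉ (outNeighbors g i).erase m := fun h => hl (mem_of_mem_erase h)
  have hlt := hS.publicGood_lt_of_expenditure_le (S := insert l ((outNeighbors g i).erase m))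
    (hS.1 i).1
    (by simp [hli.symm, hS.notMem_outNeighbors_self i])
    (fun h => hl (h ▸ mem_insert_self _ _))
    (by rw [card_insert_of_notMem hl', card_erase_add_one hm])
  rw [sum_insert hl', ← add_sum_erase _ x hm] at hlt
  linarith

end StrictNash

theorem strict_nested_split_general {n : ℕ} {G : Game n} {x y : Fin n → ℝ} {g : Net n}
    (hS : StrictNash G x y g) : IsNestedSplit g (coreOf G x) := by
  have hmem : ∀ i j, g i j = true → j ∈ coreOf G x := fun i j hij =>
    mem_coreOf.2 (hS.cost_lt_of_mem_outNeighbors (mem_outNeighbors.2 hij))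
  have hlink : ∀ i ∈ coreOf G x, ∀ j ∈ coreOf G x, i ≠ j → g i j = true :=
    fun i hi j hj hij => mem_outNeighbors.1
      (hS.mem_outNeighbors_of_cost_lt hij (mem_coreOf.1 hi) (mem_coreOf.1 hj))
  refine ⟨isCorePeriphery_of_forall_mem hmem hlink, fun i hi j hj hdeg l hl => ?_⟩
  have hij : ¬ adjBar g i j := not_or.2 ⟨fun h => hj (hmem i j h), fun h => hi (hmem j i h)⟩
  have hsub : outNeighbors g j ⊆ outNeighbors g i :=
    outNeighbors_subset_of_deg_le (fun _ _ _ => hS.provision_lt_of_notMem_of_mem) hij hdeg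
  exact mem_outNeighbors.1 (hsub (mem_outNeighbors.2 hl))

/-- If `k ≤ max_i x_i^I` and Assumption 1 holds, the network of any
strict Nash equilibrium is a nested split graph (with core the players contributing
strictly more than `k`). -/
theorem strict_nested_split {n : ℕ} (G : Game n) (hk : 0 < G.k)
    (hN : NormalGame G) (hEC : EngelCompatible G)
    (xI yI : Fin n → ℝ) (hIso : ∀ i, IsoOpt G i (xI i) (yI i))
    (hkle : ∃ i, G.k ≤ xI i)
    (x y : Fin n → ℝ) (g : Net n) (hS : StrictNash G x y g) :
    IsNestedSplit g (coreOf G x) :=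
  strict_nested_split_general hS
end
end

section
/- In the local public good game with a common Engel curve γ_i = γ for all players (Assumption 1 holding), consider the configuration (x(g^D), y(g^D), g^D) in which a set D of players forms a complete core (g_{ij} = g_{ji} = 1 for all i,j ∈ D), all other players link only profitably to core members, and all consumption choices are optimal given the network. Suppose x_i(g^D) ≥ k for all i ∈ D, and suppose a periphery player z (linked to all of D) also has x_z(g^D) ≥ k, with w_i ≥ w_z for all i ∈ D. Then in the corresponding configuration g^{D∪{z}} with core D ∪ {z}, every member of D ∪ {z} contributes at least k: x_i(g^{D∪{z}}) ≥ k for all i ∈ D ∪ {z}. -/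
open Finset Function

noncomputable section

/-!
In a complete core everyone consumes the same total `T`, so a member's provision `a` is her best
reply to spillovers `T - a`. Under normality such provisions compare across configurations: if the
total rises and demand does not, the provision does not rise. A member of `D` providing `a ≥ k` at
total `S` would, after paying for one more link, provide `a - k` at the same total, so all demands
can be taken at the link count of the larger core. Let `S'` be the total of the larger core, and
`x z + S` that of `z` before she joins. If `S' < x z + S`, comparing each member with `z` shows that
she provides at least `x z`. Otherwise, unless `x z = 0`, every member of `D` provides no more than
before and `z` no more than any of them did, so the others together provide at most `S` and leave
each member at least `x z` to provide.
-/

/-- A demand curve under which public good consumption and private expenditure both weakly increase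
with income: Assumption 1 without differentiability. -/
structure NormalDemand (f : ℝ → ℝ) : Prop where
  monotone : Monotone f
  monotone_residual : Monotone fun t => t - f t

namespace NormalDemand

variable {f : ℝ → ℝ}

theorem of_deriv_mem_Icc (hf : Differentiable ℝ f) (hf' : ∀ t, deriv f t ∈ Set.Icc (0 : ℝ) 1) :
    NormalDemand f where
  monotone := monotone_of_deriv_nonneg hf fun t => (hf' t).1
  monotone_residual := monotone_of_deriv_nonneg (differentiable_id.sub hf) fun t => by
    have h : HasDerivAt (fun t => t - f t) (1 - deriv f t) t :=
      (hasDerivAt_id t).sub (hf t).hasDerivAt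
    exact (sub_nonneg.2 (hf' t).2).trans_eq h.deriv.symm

theorem comp_const_add (hf : NormalDemand f) (c : ℝ) : NormalDemand fun t => f (c + t) where
  monotone _ _ h := hf.monotone (add_le_add_right h c)
  monotone_residual a b h := by
    have := hf.monotone_residual (add_le_add_right h c)
    simp only at this ⊢
    linarith

theorem sub_le_sub_of_image_lt (hf : NormalDemand f) {a b : ℝ} (h : f a < f b) :
    f b - f a ≤ b - a := by
  have := hf.monotone_residual (hf.monotone.reflect_lt h).le
  simp only at this
  linarith

end NormalDemand

/-- `a` is the optimal provision, `x_i = max {γ(w̄_i) - x̄_{-i}, 0}` in the paper, of a player who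
consumes `T` in total. Here `f` is her demand as a function of the spillovers `T - a`, with wealth
and linking costs absorbed into it. -/
def OptimalProvision (f : ℝ → ℝ) (T a : ℝ) : Prop :=
  a = max (f (T - a) - (T - a)) 0

namespace OptimalProvision

variable {f g : ℝ → ℝ} {T T' a b k : ℝ}

theorem nonneg (h : OptimalProvision f T a) : 0 ≤ a :=
  (le_max_right _ _).trans_eq h.symm

theorem demand_le (h : OptimalProvision f T a) : f (T - a) ≤ T := by
  have : f (T - a) - (T - a) ≤ a := (le_max_left _ _).trans_eq h.symm
  linarith

theorem demand_eq (h : OptimalProvision f T a) (ha : 0 < a) : f (T - a) = T := by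
  rcases max_choice (f (T - a) - (T - a)) 0 with hmax | hmax
  · linarith [h.trans hmax]
  · exact absurd (h.trans hmax) ha.ne'

theorem le_of_total_lt (hb : OptimalProvision g T' b) (ha : OptimalProvision f T a)
    (hg : NormalDemand g) (hgf : g ≤ f) (hT : T < T') : b ≤ a := by
  rcases hb.nonneg.eq_or_lt with rfl | hpos
  · exact ha.nonneg
  · have hle : g (T - a) ≤ T := (hgf _).trans ha.demand_le
    have heq : g (T' - b) = T' := hb.demand_eq hpos
    have hslope := hg.sub_le_sub_of_image_lt (hle.trans_lt (hT.trans_eq heq.symm))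
    linarith

theorem sub_cost (h : OptimalProvision (fun s => f (k + s)) T a) (hk : 0 ≤ k) (hka : k ≤ a) :
    OptimalProvision f T (a - k) := by
  have hspill : T - (a - k) = k + (T - a) := by ring
  unfold OptimalProvision at h ⊢
  rw [hspill, sub_add_eq_sub_sub_swap]
  rcases max_cases (f (k + (T - a)) - (T - a)) 0 with ⟨hmax, -⟩ | ⟨hmax, hneg⟩
  · have ha : f (k + (T - a)) - (T - a) = a := (h.trans hmax).symm
    rw [ha, max_eq_left (sub_nonneg.2 hka)]
  · have ha : a = 0 := h.trans hmax
    have hk0 : k = 0 := le_antisymm (hka.trans_eq ha) hk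
    rw [max_eq_right (by linarith), ha, hk0, sub_zero]

end OptimalProvision

section EnlargedCore

variable {ι : Type*} [DecidableEq ι] {D : Finset ι} {z : ι} {x x' : ι → ℝ}

theorem le_of_sum_le_sum_insert (hz : z ∉ D)
    (hsum : ∑ j ∈ insert z D, x j ≤ ∑ j ∈ insert z D, x' j)
    (hD : ∀ j ∈ D, x' j ≤ x j) (hzD : ∀ j ∈ D, x' z ≤ x j) :
    ∀ i ∈ insert z D, x z ≤ x' i := by
  rw [sum_insert hz, sum_insert hz] at hsum
  refine (forall_mem_insert ..).2 ⟨?_, fun i hi => ?_⟩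
  · linarith [sum_le_sum hD]
  · have hrest : ∑ j ∈ D.erase i, x' j ≤ ∑ j ∈ D.erase i, x j :=
      sum_le_sum fun j hj => hD j (mem_of_mem_erase hj)
    linarith [hzD i hi, add_sum_erase D x hi, add_sum_erase D x' hi]

theorem OptimalProvision.le_of_insert_core {f : ι → ℝ → ℝ} {k : ℝ} (hk : 0 ≤ k) (hz : z ∉ D)
    (hf : ∀ i ∈ insert z D, NormalDemand (f i)) (hfz : ∀ i ∈ D, f z ≤ f i)
    (hD : ∀ i ∈ D, OptimalProvision (f i) (∑ j ∈ D, x j) (x i - k))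
    (hxz : OptimalProvision (f z) (∑ j ∈ insert z D, x j) (x z))
    (hx' : ∀ i ∈ insert z D, OptimalProvision (f i) (∑ j ∈ insert z D, x' j) (x' i)) :
    ∀ i ∈ insert z D, x z ≤ x' i := by
  have hmem : z ∈ insert z D := mem_insert_self z D
  have hfz' : ∀ i ∈ insert z D, f z ≤ f i := (forall_mem_insert ..).2 ⟨le_rfl, hfz⟩
  rcases lt_or_ge (∑ j ∈ insert z D, x' j) (∑ j ∈ insert z D, x j) with hlt | hge
  · exact fun i hi => hxz.le_of_total_lt (hx' i hi) (hf z hmem) (hfz' i hi) hlt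
  rcases hxz.nonneg.eq_or_lt with hzero | hpos
  · exact fun i hi => hzero.symm.trans_le (hx' i hi).nonneg
  have htotal : ∑ j ∈ D, x j < ∑ j ∈ insert z D, x' j := by
    linarith [sum_insert (f := x) hz]
  have hle : ∀ i ∈ insert z D, ∀ j ∈ D, f i ≤ f j → x' i ≤ x j := fun i hi j hj hij =>
    ((hx' i hi).le_of_total_lt (hD j hj) (hf i hi) hij htotal).trans (sub_le_self _ hk)
  exact le_of_sum_le_sum_insert hz hge
    (fun j hj => hle j (mem_insert_of_mem hj) j hj le_rfl) fun j hj => hle z hmem j hj (hfz j hj)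

end EnlargedCore

section Network

variable {n : ℕ} {G : Game n} {x y : Fin n → ℝ} {g : Net n} {i : Fin n} {C : Finset (Fin n)}

/-- The set `N_i(g)` of players to whom `i` sponsors a link. -/
def nbrs (g : Net n) (i : Fin n) : Finset (Fin n) :=
  univ.filter fun j => g i j = true

/-- The members of `C` are mutually linked and sponsor no links outside `C`: the core of the
paper's network `g^C`. -/
def IsCompleteCore (g : Net n) (C : Finset (Fin n)) : Prop :=
  ∀ i ∈ C, nbrs g i = C.erase i

/-- Public good demand of player `i` as a function of spillovers, when she sponsors `d` links. -/
def linkedDemand (G : Game n) (i : Fin n) (d : ℕ) (s : ℝ) : ℝ :=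
  G.γ i (G.w i - d * G.k + s)

theorem nbrs_eq_iff : nbrs g i = C ↔ ∀ j, g i j = true ↔ j ∈ C := by
  simp [nbrs, Finset.ext_iff]

theorem nbrs_eq_of_periphery (hC : ∀ j ∈ C, g i j = true) (hper : ∀ j ∉ C, g i j = false) :
    nbrs g i = C :=
  nbrs_eq_iff.2 fun j => ⟨fun h => by_contra fun hj => by simp [hper j hj] at h, hC j⟩

theorem isCompleteCore_iff :
    IsCompleteCore g C ↔ ∀ i ∈ C, ∀ j, g i j = true ↔ (j ∈ C ∧ j ≠ i) := by
  simp only [IsCompleteCore, nbrs_eq_iff, mem_erase, and_comm]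

theorem spill_eq_sum_nbrs (x : Fin n → ℝ) (g : Net n) (i : Fin n) :
    spill x g i = ∑ j ∈ nbrs g i, x j :=
  (sum_filter _ _).symm

theorem spill_update_self (h : g i i = false) (x : Fin n → ℝ) (t : ℝ) :
    spill (update x i t) g i = spill x g i := by
  have hi : i ∉ nbrs g i := by simp [nbrs, h]
  rw [spill_eq_sum_nbrs, spill_eq_sum_nbrs, sum_update_of_notMem hi]

theorem linkedDemand_succ (G : Game n) (i : Fin n) (d : ℕ) :
    linkedDemand G i d = fun s => linkedDemand G i (d + 1) (G.k + s) := by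
  funext s
  unfold linkedDemand
  congr 1
  push_cast
  ring

theorem NormalGame.normalDemand (hN : NormalGame G) (i : Fin n) : NormalDemand (G.γ i) :=
  .of_deriv_mem_Icc ((hN i).1.differentiable one_ne_zero) (hN i).2

theorem NormalDemand.linkedDemand (h : NormalDemand (G.γ i)) (d : ℕ) :
    NormalDemand (linkedDemand G i d) :=
  h.comp_const_add _

theorem ConsOpt.cons_eq_max (hOpt : ConsOpt G x y g) (hEC : EngelCompatible G) (i : Fin n) :
    _root_.cons x g i = max (G.γ i (netInc G x g i)) (spill x g i) := by
  obtain ⟨⟨hx, hy, hloop, hbudget⟩, hmax⟩ := hOpt i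
  have hspill : 0 ≤ spill x g i := by
    rw [spill_eq_sum_nbrs]
    exact sum_nonneg fun j _ => (hOpt j).1.1
  refine hEC i _ _ _ (y i) hspill (le_add_of_nonneg_left hx) hy ?_ fun c b hc hb hline => ?_
  · unfold _root_.cons netInc
    linarith
  · have hfeas : Feasible G (update x i (c - spill x g i)) (update y i b) g i := by
      refine ⟨by simpa using hc, by simpa using hb, hloop, ?_⟩
      simp only [update_self]
      unfold netInc at hline
      linarith
    simpa [payoff, _root_.cons, spill_update_self hloop] using hmax _ _ hfeas

theorem ConsOpt.optimalProvision (hOpt : ConsOpt G x y g) (hEC : EngelCompatible G) (i : Fin n) :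
    OptimalProvision (linkedDemand G i (nbrs g i).card) (x i + ∑ j ∈ nbrs g i, x j) (x i) := by
  have h := hOpt.cons_eq_max hEC i
  rw [_root_.cons, ← eq_sub_iff_add_eq, ← max_sub_sub_right, sub_self] at h
  rwa [OptimalProvision, add_sub_cancel_left, ← spill_eq_sum_nbrs]

theorem IsCompleteCore.optimalProvision (hcore : IsCompleteCore g C) (hOpt : ConsOpt G x y g)
    (hEC : EngelCompatible G) (hi : i ∈ C) :
    OptimalProvision (linkedDemand G i (C.card - 1)) (∑ j ∈ C, x j) (x i) := by
  have h := hOpt.optimalProvision hEC i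
  rwa [hcore i hi, add_sum_erase C x hi, card_erase_of_mem hi] at h

theorem in_the_core_general (hEC : EngelCompatible G) {D : Finset (Fin n)} {z : Fin n} (hz : z ∉ D)
    (hN : ∀ i ∈ insert z D, NormalDemand (G.γ i))
    (hdemand : ∀ i ∈ D, ∀ t, G.γ z (G.w z + t) ≤ G.γ i (G.w i + t))
    (hOpt : ConsOpt G x y g) (hcore : IsCompleteCore g D) (hzD : nbrs g z = D)
    (hxD : ∀ i ∈ D, G.k ≤ x i)
    {x' y' : Fin n → ℝ} {g' : Net n} (hOpt' : ConsOpt G x' y' g')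
    (hcore' : IsCompleteCore g' (insert z D)) :
    ∀ i ∈ insert z D, x z ≤ x' i := by
  refine OptimalProvision.le_of_insert_core (f := fun i => linkedDemand G i D.card) G.k_nonneg hz
    (fun i hi => (hN i hi).linkedDemand _) (fun i hi s => ?_) (fun i hi => ?_) ?_ fun i hi => ?_
  · simpa only [linkedDemand, sub_add_eq_add_sub, add_sub_assoc] using
      hdemand i hi (s - D.card * G.k)
  · have h := hcore.optimalProvision hOpt hEC hi
    rw [linkedDemand_succ, Nat.sub_add_cancel (card_pos.2 ⟨i, hi⟩)] at h
    exact h.sub_cost G.k_nonneg (hxD i hi)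
  · have h := hOpt.optimalProvision hEC z
    rwa [hzD, ← sum_insert hz] at h
  · have h := hcore'.optimalProvision hOpt' hEC hi
    rwa [card_insert_of_notMem hz, Nat.add_sub_cancel] at h

end Network

/-- with a common Engel curve, if in the configuration with complete core
`D` every core member and a periphery player `z` (linked to all of `D`, poorer than all
of `D`) contribute at least `k`, then in the corresponding configuration with core
`D ∪ {z}` every core member contributes at least `k`. -/
theorem in_the_core {n : ℕ} (G : Game n) (hk : 0 < G.k)
    (hN : NormalGame G) (hEC : EngelCompatible G)
    (γ0 : ℝ → ℝ) (hγ : ∀ i, G.γ i = γ0)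
    (D : Finset (Fin n)) (z : Fin n) (hz : z ∉ D)
    (x y : Fin n → ℝ) (g : Net n) (hOpt : ConsOpt G x y g)
    (hcore : ∀ i ∈ D, ∀ j, g i j = true ↔ (j ∈ D ∧ j ≠ i))
    (hper : ∀ i ∉ D, ∀ j ∉ D, g i j = false)
    (hzD : ∀ i ∈ D, g z i = true)
    (hxD : ∀ i ∈ D, G.k ≤ x i) (hxz : G.k ≤ x z)
    (hwz : ∀ i ∈ D, G.w z ≤ G.w i)
    (x' y' : Fin n → ℝ) (g' : Net n) (hOpt' : ConsOpt G x' y' g')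
    (hcore' : ∀ i ∈ insert z D, ∀ j, g' i j = true ↔ (j ∈ insert z D ∧ j ≠ i))
    (hper' : ∀ i ∉ insert z D, ∀ j ∉ insert z D, g' i j = false) :
    ∀ i ∈ insert z D, G.k ≤ x' i := by
  have hdemand : ∀ i ∈ D, ∀ t, G.γ z (G.w z + t) ≤ G.γ i (G.w i + t) := fun i hi t => by
    simpa only [hγ] using (hN.normalDemand z).monotone (add_le_add_left (hwz i hi) t)
  exact fun i hi => hxz.trans <| in_the_core_general hEC hz (fun i _ => hN.normalDemand i) hdemand
    hOpt (isCompleteCore_iff.2 hcore) (nbrs_eq_of_periphery hzD (hper z hz)) hxD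
    hOpt' (isCompleteCore_iff.2 hcore') i hi
end
end
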